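/- arXiv:2204.05277 — 2 statements merged into one kernel-verified Lean document; each statement's English description precedes it below -/
import Mathlib

section
/- There exists a binary sequence x ∈ {0,1}^ℕ that is normal in base 2 and satisfies lim_{n→∞} L_n(x)/log₂ n = ∞. -/
open Filter

open Classical in
/-- `L_n(x)`: the maximal length of a run of consecutive ones among the first `n`
digits (positions `1,…,n`) of the binary sequence `x`. -/
noncomputable def runL (x : ℕ → Bool) (n : ℕ) : ℕ :=
  Nat.findGreatest
    (fun j => ∃ i, i + j ≤ n ∧ ∀ k, 1 ≤ k → k ≤ j → x (i + k) = true) n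

/-- `N(x, w, n)`: the number of occurrences of the block `w` in `x` starting at
a position `i` with `1 ≤ i ≤ n`. -/
def occCount (x : ℕ → Bool) (w : List Bool) (n : ℕ) : ℕ :=
  ((Finset.Icc 1 n).filter
    (fun i => ∀ k ∈ Finset.range w.length, x (i + k) = w.getD k false)).card

/-- A binary sequence is normal in base 2 if every nonempty block `w` appears
with frequency `2^{-|w|}`. -/
def NormalBaseTwo (x : ℕ → Bool) : Prop :=
  ∀ w : List Bool, w ≠ [] →
    Tendsto (fun n : ℕ => (occCount x w n : ℝ) / (n : ℝ)) atTop
      (nhds (1 / 2 ^ w.length))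

/-!
Almost every sequence of fair coin tosses is normal: blocks starting at positions in a fixed
residue class modulo a number at least their length are independent, so the strong law of large
numbers applies to each class, and the finitely many classes are then averaged. Overwriting a normal
sequence by ones on a set of density zero keeps it normal, since a block of length `m` sees the
change only at the positions of `m` translates of that set. The windows `(4 ^ k, 4 ^ k + 2 ^ k]`
have density zero, yet overwriting them by ones forces `L_n ≥ √n / 4` for `n ≥ 4`, which dominates
`log₂ n`.
-/

open Finset Topology MeasureTheory ProbabilityTheory

section CesaroMean

/-- The sequence `f` has Cesàro mean `c`: the averages of `f 0, …, f (n - 1)` converge to `c`. -/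
def HasCesaroMean {E : Type*} [AddCommMonoid E] [Module ℝ E] [TopologicalSpace E]
    (f : ℕ → E) (c : E) : Prop :=
  Tendsto (fun n : ℕ ↦ (n : ℝ)⁻¹ • ∑ i ∈ range n, f i) atTop (𝓝 c)

lemma tendsto_natCast_add_div (k : ℕ) :
    Tendsto (fun n : ℕ ↦ ((n + k : ℕ) : ℝ) / n) atTop (𝓝 1) := by
  simpa using (tendsto_natCast_div_add_atTop (k : ℝ)).inv₀ one_ne_zero

lemma tendsto_natCast_add_natDiv_div (k m : ℕ) :
    Tendsto (fun n : ℕ ↦ (((n + k) / m : ℕ) : ℝ) / n) atTop (𝓝 (m : ℝ)⁻¹) := by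
  have hfloor : Tendsto (fun n : ℕ ↦ ((n / m : ℕ) : ℝ) / n) atTop (𝓝 (m : ℝ)⁻¹) := by
    refine ((tendsto_nat_floor_mul_div_atTop (R := ℝ) (a := (m : ℝ)⁻¹) (by positivity)).comp
      tendsto_natCast_atTop_atTop).congr fun n ↦ ?_
    rw [Function.comp_apply, inv_mul_eq_div, Nat.floor_div_natCast, Nat.floor_natCast]
  have hshift := (hfloor.comp (tendsto_add_atTop_nat k)).mul (tendsto_natCast_add_div k)
  rw [mul_one] at hshift
  refine hshift.congr' ?_
  filter_upwards [eventually_gt_atTop 0] with n hn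
  have : ((n + k : ℕ) : ℝ) ≠ 0 := by positivity
  exact div_mul_div_cancel₀ this

/-- Here `(n + (m - 1 - r)) / m` is `(n - r) / m` rounded up, the number of `i < n` with
`i ≡ r [MOD m]`. -/
lemma sum_range_eq_sum_residues {M : Type*} [AddCommMonoid M] (f : ℕ → M) {m : ℕ} (hm : m ≠ 0)
    (n : ℕ) :
    ∑ i ∈ range n, f i
      = ∑ r ∈ range m, ∑ j ∈ range ((n + (m - 1 - r)) / m), f (r + m * j) := by
  have hm' : 0 < m := Nat.pos_of_ne_zero hm
  have hmem {r j : ℕ} (hr : r < m) : j < (n + (m - 1 - r)) / m ↔ r + m * j < n := by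
    rw [← Nat.succ_le_iff, Nat.le_div_iff_mul_le hm', Nat.succ_mul, mul_comm j]
    lia
  rw [Finset.sum_sigma']
  refine Finset.sum_nbij' (fun i ↦ ⟨i % m, i / m⟩) (fun p ↦ p.1 + m * p.2) ?_ ?_ ?_ ?_ ?_
  · intro i hi
    have hr : i % m < m := Nat.mod_lt i hm'
    simpa [hr, hmem hr, Nat.mod_add_div] using hi
  · rintro ⟨r, j⟩ hp
    obtain ⟨hr, hj⟩ : r < m ∧ j < (n + (m - 1 - r)) / m := by simpa using hp
    simpa using (hmem hr).1 hj
  · exact fun i _ ↦ Nat.mod_add_div i m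
  · rintro ⟨r, j⟩ hp
    obtain ⟨hr, -⟩ : r < m ∧ j < (n + (m - 1 - r)) / m := by simpa using hp
    simp [Nat.add_mul_mod_self_left, Nat.mod_eq_of_lt hr, Nat.add_mul_div_left _ _ hm',
      Nat.div_eq_of_lt hr]
  · exact fun i _ ↦ by rw [Nat.mod_add_div]

namespace HasCesaroMean

section TopologicalModule

variable {E : Type*} [AddCommGroup E] [Module ℝ E] [TopologicalSpace E]
  {f : ℕ → E} {c : E}

lemma sum [ContinuousAdd E] {ι : Type*} {s : Finset ι} {f : ι → ℕ → E} {c : ι → E}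
    (h : ∀ k ∈ s, HasCesaroMean (f k) (c k)) :
    HasCesaroMean (fun i ↦ ∑ k ∈ s, f k i) (∑ k ∈ s, c k) := by
  refine (tendsto_finsetSum s h).congr fun n ↦ ?_
  rw [← Finset.smul_sum, Finset.sum_comm]

lemma comp_add [IsTopologicalAddGroup E] [ContinuousSMul ℝ E] (h : HasCesaroMean f c)
    (k : ℕ) : HasCesaroMean (fun i ↦ f (i + k)) c := by
  have hscaled := (tendsto_natCast_add_div k).smul (h.comp (tendsto_add_atTop_nat k))
  have hinit : Tendsto (fun n : ℕ ↦ (n : ℝ)⁻¹ • ∑ i ∈ range k, f i) atTop (𝓝 0) := by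
    simpa using (tendsto_inv_atTop_nhds_zero_nat (𝕜 := ℝ)).smul_const (∑ i ∈ range k, f i)
  have hdiff := hscaled.sub hinit
  rw [one_smul, sub_zero] at hdiff
  refine hdiff.congr' ?_
  filter_upwards [eventually_gt_atTop 0] with n hn
  have hnk : ((n + k : ℕ) : ℝ) ≠ 0 := by positivity
  have hsplit : ∑ i ∈ range (n + k), f i = ∑ i ∈ range k, f i + ∑ i ∈ range n, f (i + k) := by
    simp_rw [add_comm n k, Finset.sum_range_add, add_comm k]
  rw [Function.comp_apply, smul_smul, div_mul_eq_mul_div, mul_inv_cancel₀ hnk, one_div, hsplit,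
    smul_add, add_sub_cancel_left]

lemma of_residues [ContinuousAdd E] [ContinuousSMul ℝ E] {m : ℕ} (hm : m ≠ 0)
    (h : ∀ r < m, HasCesaroMean (fun j ↦ f (r + m * j)) c) : HasCesaroMean f c := by
  have hclass (r : ℕ) (hr : r ∈ range m) :
      Tendsto (fun n : ℕ ↦ (n : ℝ)⁻¹ • ∑ j ∈ range ((n + (m - 1 - r)) / m), f (r + m * j))
        atTop (𝓝 ((m : ℝ)⁻¹ • c)) := by
    have hlen : Tendsto (fun n : ℕ ↦ (n + (m - 1 - r)) / m) atTop atTop :=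
      (Nat.tendsto_div_const_atTop hm).comp (tendsto_add_atTop_nat _)
    refine ((tendsto_natCast_add_natDiv_div (m - 1 - r) m).smul
      ((h r (mem_range.1 hr)).comp hlen)).congr fun n ↦ ?_
    rcases eq_or_ne ((n + (m - 1 - r)) / m) 0 with h0 | h0
    · simp [h0]
    · have : (((n + (m - 1 - r)) / m : ℕ) : ℝ) ≠ 0 := Nat.cast_ne_zero.2 h0
      rw [Function.comp_apply, smul_smul, div_mul_eq_mul_div, mul_inv_cancel₀ this, one_div]
  have htotal : ∑ _r ∈ range m, (m : ℝ)⁻¹ • c = c := by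
    rw [Finset.sum_const, card_range, ← Nat.cast_smul_eq_nsmul ℝ,
      smul_inv_smul₀ (Nat.cast_ne_zero.2 hm)]
  rw [← htotal]
  refine (tendsto_finsetSum (range m) hclass).congr fun n ↦ ?_
  rw [← Finset.smul_sum, ← sum_range_eq_sum_residues f hm]

end TopologicalModule

lemma of_norm_sub_le {E : Type*} [SeminormedAddCommGroup E] [NormedSpace ℝ E] {f g : ℕ → E}
    {h : ℕ → ℝ} {c : E} (hf : HasCesaroMean f c) (hh : HasCesaroMean h 0)
    (hle : ∀ i, ‖g i - f i‖ ≤ h i) : HasCesaroMean g c := by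
  have hdiff : Tendsto
      (fun n : ℕ ↦ (n : ℝ)⁻¹ • ∑ i ∈ range n, g i - (n : ℝ)⁻¹ • ∑ i ∈ range n, f i)
      atTop (𝓝 0) := by
    refine squeeze_zero_norm (fun n ↦ ?_) hh
    rw [← smul_sub, ← Finset.sum_sub_distrib, norm_smul, smul_eq_mul, Real.norm_of_nonneg
      (by positivity)]
    gcongr
    exact norm_sum_le_of_le _ fun i _ ↦ hle i
  simpa [HasCesaroMean] using hdiff.add hf

end HasCesaroMean

end CesaroMean

section Density

/-- The set `A` of natural numbers has natural density `d`, expressed as the Cesàro mean of its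
indicator function. -/
def HasDensity (A : Set ℕ) (d : ℝ) : Prop :=
  HasCesaroMean (A.indicator (1 : ℕ → ℝ)) d

namespace HasDensity

variable {A B T : Set ℕ} {d : ℝ}

lemma preimage_add (h : HasDensity A d) (k : ℕ) : HasDensity ((· + k) ⁻¹' A) d :=
  h.comp_add k

lemma congr_of_forall_notMem (hA : HasDensity A d) (hT : HasDensity T 0)
    (h : ∀ i ∉ T, i ∈ A ↔ i ∈ B) : HasDensity B d := by
  refine hA.of_norm_sub_le hT fun i ↦ ?_
  by_cases hi : i ∈ T
  · by_cases hiA : i ∈ A <;> by_cases hiB : i ∈ B <;> simp [hi, hiA, hiB]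
  · by_cases hiA : i ∈ A <;> simp [hi, hiA, ← h i hi]

lemma iUnion_zero {ι : Type*} [Finite ι] {S : ι → Set ℕ} (h : ∀ k, HasDensity (S k) 0) :
    HasDensity (⋃ k, S k) 0 := by
  have := Fintype.ofFinite ι
  have hzero : HasCesaroMean (0 : ℕ → ℝ) 0 := by simp [HasCesaroMean]
  have hsum := HasCesaroMean.sum fun k (_ : k ∈ Finset.univ) ↦ h k
  rw [Finset.sum_const_zero] at hsum
  refine hzero.of_norm_sub_le hsum fun i ↦ ?_
  have hnonneg (k : ι) : 0 ≤ (S k).indicator (1 : ℕ → ℝ) i :=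
    Set.indicator_nonneg (fun _ _ ↦ zero_le_one) i
  by_cases hi : i ∈ ⋃ k, S k
  · obtain ⟨k, hk⟩ := Set.mem_iUnion.1 hi
    calc ‖(⋃ k, S k).indicator (1 : ℕ → ℝ) i - 0‖ = (S k).indicator 1 i := by simp [hi, hk]
      _ ≤ ∑ k, (S k).indicator (1 : ℕ → ℝ) i :=
        Finset.single_le_sum (fun k _ ↦ hnonneg k) (Finset.mem_univ k)
  · simpa [hi] using Finset.sum_nonneg fun k _ ↦ hnonneg k

end HasDensity

end Density

section Block

/-- The block of length `m` starting at position `i` of the sequence `x`, i.e. the word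
`x i, x (i + 1), …, x (i + m - 1)`. -/
def block {α : Type*} (x : ℕ → α) (m i : ℕ) : Fin m → α :=
  fun k ↦ x (i + k)

lemma HasDensity.block_congr {α : Type*} {x y : ℕ → α} {S : Set ℕ} {m : ℕ} {v : Fin m → α} {d : ℝ}
    {a : ℕ} (hx : HasDensity {i | block x m (i + a) = v} d) (hS : HasDensity S 0)
    (hxy : Set.EqOn x y Sᶜ) : HasDensity {i | block y m (i + a) = v} d := by
  refine hx.congr_of_forall_notMem (HasDensity.iUnion_zero fun k : Fin m ↦ hS.preimage_add (a + k))
    fun i hi ↦ ?_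
  have hblock : block x m (i + a) = block y m (i + a) :=
    funext fun k ↦ hxy fun hk ↦ hi (Set.mem_iUnion.2 ⟨k, by rwa [Nat.add_assoc] at hk⟩)
  simp [hblock]

variable {Ω α : Type*} {mΩ : MeasurableSpace Ω} {mα : MeasurableSpace α} {P : Measure Ω}
  {μ : Measure α} {X : ℕ → Ω → α}

lemma indepFun_block (hX : iIndepFun X P) (hmeas : ∀ i, AEMeasurable (X i) P) {m i j : ℕ}
    (hij : i + m ≤ j) :
    IndepFun (fun ω ↦ block (X · ω) m i) (fun ω ↦ block (X · ω) m j) P := by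
  have hdisj : Disjoint (Ico i (i + m)) (Ico j (j + m)) := by
    rw [Finset.disjoint_left]
    intro l
    simp only [Finset.mem_Ico]
    lia
  have hread (a : ℕ) :
      Measurable fun (v : Ico a (a + m) → α) (k : Fin m) ↦ v ⟨a + k, by simp⟩ := by
    fun_prop
  exact (hX.indepFun_finset₀ _ _ hdisj hmeas).comp (hread i) (hread j)

lemma pairwise_indepFun_block (hX : iIndepFun X P) (hmeas : ∀ i, AEMeasurable (X i) P) {m d : ℕ}
    (hmd : m ≤ d) (r : ℕ) :
    Pairwise fun i j ↦ IndepFun (fun ω ↦ block (X · ω) m (r + d * i))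
      (fun ω ↦ block (X · ω) m (r + d * j)) P := by
  have hlt {i j : ℕ} (hij : i < j) : IndepFun (fun ω ↦ block (X · ω) m (r + d * i))
      (fun ω ↦ block (X · ω) m (r + d * j)) P := by
    have hstride : d * (i + 1) ≤ d * j := Nat.mul_le_mul_left d hij
    exact indepFun_block hX hmeas (by lia)
  exact fun i j hij ↦ hij.lt_or_gt.elim hlt fun hji ↦ (hlt hji).symm

lemma hasLaw_block (hX : iIndepFun X P) (hlaw : ∀ i, HasLaw (X i) μ P) (m i : ℕ) :
    HasLaw (fun ω ↦ block (X · ω) m i) (Measure.pi fun _ : Fin m ↦ μ) P :=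
  (hX.precomp ((add_right_injective i).comp Fin.val_injective)).hasLaw_pi fun k ↦ hlaw (i + k)

theorem ae_hasCesaroMean_block {E : Type*} [NormedAddCommGroup E] [NormedSpace ℝ E]
    [CompleteSpace E] [MeasurableSpace E] [BorelSpace E] (hX : iIndepFun X P)
    (hlaw : ∀ i, HasLaw (X i) μ P) {m : ℕ} {g : (Fin m → α) → E}
    (hg : Integrable g (Measure.pi fun _ ↦ μ)) :
    ∀ᵐ ω ∂P,
      HasCesaroMean (fun i ↦ g (block (X · ω) m i)) (∫ v, g v ∂Measure.pi fun _ ↦ μ) := by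
  have hblock (i : ℕ) := hasLaw_block hX hlaw m i
  have hmeas (i : ℕ) := (hlaw i).aemeasurable
  have hg_map (i : ℕ) : AEMeasurable g (P.map fun ω ↦ block (X · ω) m i) :=
    (hblock i).map_eq ▸ hg.1.aemeasurable
  -- The stride `m + 1` instead of `m` spares a separate treatment of the empty block.
  have hclass (r : ℕ) : ∀ᵐ ω ∂P, HasCesaroMean
      (fun j ↦ g (block (X · ω) m (r + (m + 1) * j))) (∫ v, g v ∂Measure.pi fun _ ↦ μ) := by
    let Y (j : ℕ) (ω : Ω) : Fin m → α := block (X · ω) m (r + (m + 1) * j)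
    have hY (j : ℕ) : HasLaw (Y j) (Measure.pi fun _ ↦ μ) P := hblock _
    have hint : Integrable (g ∘ Y 0) P :=
      ((hY 0).map_eq.symm ▸ hg).comp_aemeasurable (hY 0).aemeasurable
    have hindep : Pairwise fun i j ↦ IndepFun (g ∘ Y i) (g ∘ Y j) P := fun i j hij ↦
      (pairwise_indepFun_block hX hmeas m.le_succ r hij).comp₀ (hY i).aemeasurable
        (hY j).aemeasurable (hg_map _) (hg_map _)
    have hident (j : ℕ) : IdentDistrib (g ∘ Y j) (g ∘ Y 0) P P :=
      IdentDistrib.comp_of_aemeasurable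
        ⟨(hY j).aemeasurable, (hY 0).aemeasurable, (hY j).map_eq.trans (hY 0).map_eq.symm⟩
        (hg_map _)
    filter_upwards [strong_law_ae (fun j ↦ g ∘ Y j) hint hindep hident] with ω hω
    rwa [(hY 0).integral_comp hg.1] at hω
  filter_upwards [ae_all_iff.2 hclass] with ω hω
  exact HasCesaroMean.of_residues m.succ_ne_zero fun r _ ↦ hω r

theorem ae_hasDensity_block [MeasurableSingletonClass α] (hX : iIndepFun X P)
    (hlaw : ∀ i, HasLaw (X i) μ P) {m : ℕ} (v : Fin m → α) :
    ∀ᵐ ω ∂P, HasDensity {i | block (X · ω) m i = v} (∏ k, μ.real {v k}) := by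
  have := hX.isProbabilityMeasure
  have : IsProbabilityMeasure μ := (hlaw 0).isProbabilityMeasure_iff.1 this
  have hintegrable : Integrable (({v} : Set (Fin m → α)).indicator (1 : (Fin m → α) → ℝ))
      (Measure.pi fun _ ↦ μ) :=
    (integrable_const 1).indicator (measurableSet_singleton v)
  have hintegral : ∫ u, ({v} : Set (Fin m → α)).indicator (1 : (Fin m → α) → ℝ) u
      ∂(Measure.pi fun _ ↦ μ) = ∏ k, μ.real {v k} := by
    rw [integral_indicator_one (measurableSet_singleton v), measureReal_def, Measure.pi_singleton,
      ENNReal.toReal_prod]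
    rfl
  rw [← hintegral]
  exact ae_hasCesaroMean_block hX hlaw hintegrable

end Block

section Normal

lemma occCount_eq_sum_indicator (x : ℕ → Bool) (w : List Bool) (n : ℕ) :
    (occCount x w n : ℝ)
      = ∑ i ∈ range n, {i | block x w.length (i + 1) = w.get}.indicator (1 : ℕ → ℝ) i := by
  have hblock (i : ℕ) : (∀ k ∈ range w.length, x (i + k) = w.getD k false)
      ↔ block x w.length i = w.get := by
    rw [funext_iff, Fin.forall_iff]
    simp +contextual [block]
  simp only [occCount, hblock]
  rw [Finset.card_filter, Nat.cast_sum, ← Finset.Ico_add_one_right_eq_Icc,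
    Finset.sum_Ico_eq_sum_range]
  simp [Set.indicator_apply, add_comm 1]

lemma normalBaseTwo_iff {x : ℕ → Bool} :
    NormalBaseTwo x ↔ ∀ w : List Bool, w ≠ [] →
      HasDensity {i | block x w.length (i + 1) = w.get} (1 / 2 ^ w.length) := by
  simp only [NormalBaseTwo, HasDensity, HasCesaroMean, occCount_eq_sum_indicator, smul_eq_mul,
    inv_mul_eq_div]

theorem exists_normalBaseTwo : ∃ x : ℕ → Bool, NormalBaseTwo x := by
  obtain ⟨Ω, _, P, X, -, hlaw, hX, _⟩ := exists_iid ℕ (PMF.uniformOfFintype Bool).toMeasure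
  have hcoin (b : Bool) : (PMF.uniformOfFintype Bool).toMeasure.real {b} = 1 / 2 := by
    rw [measureReal_def, PMF.toMeasure_apply_singleton _ _ (measurableSet_singleton b)]
    simp
  have hae : ∀ᵐ ω ∂P, ∀ w : List Bool,
      HasDensity {i | block (X · ω) w.length i = w.get} (1 / 2 ^ w.length) := by
    rw [ae_all_iff]
    intro w
    simpa [hcoin] using ae_hasDensity_block hX hlaw w.get
  obtain ⟨ω, hω⟩ := hae.exists
  exact ⟨(X · ω), normalBaseTwo_iff.2 fun w _ ↦ (hω w).preimage_add 1⟩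

lemma NormalBaseTwo.congr_of_hasDensity_zero {x y : ℕ → Bool} {S : Set ℕ} (hx : NormalBaseTwo x)
    (hS : HasDensity S 0) (hxy : Set.EqOn x y Sᶜ) : NormalBaseTwo y := by
  rw [normalBaseTwo_iff] at hx ⊢
  exact fun w hw ↦ (hx w hw).block_congr hS hxy

end Normal

section Runs

/-- The union of the windows `(4 ^ k, 4 ^ k + 2 ^ k]`: a set of density zero which has, below every
`n`, a run of consecutive elements of length of order `√n`. -/
def sqrtWindows : Set ℕ :=
  ⋃ k : ℕ, Set.Ioc (4 ^ k) (4 ^ k + 2 ^ k)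

open Classical in
lemma card_filter_mem_sqrtWindows_le (n : ℕ) :
    #{i ∈ range n | i ∈ sqrtWindows} ≤ 2 * 2 ^ Nat.log 4 n := by
  have hcover : {i ∈ range n | i ∈ sqrtWindows} ⊆
      (range (Nat.log 4 n + 1)).biUnion fun k ↦ Finset.Ioc (4 ^ k) (4 ^ k + 2 ^ k) := by
    intro i hi
    obtain ⟨hin, k, hk⟩ : i < n ∧ ∃ k, 4 ^ k < i ∧ i ≤ 4 ^ k + 2 ^ k := by
      simpa [sqrtWindows] using hi
    have hkn : k ≤ Nat.log 4 n := Nat.le_log_of_pow_le (by norm_num) (by lia)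
    simpa [Nat.lt_succ_iff] using ⟨k, hkn, hk⟩
  calc #{i ∈ range n | i ∈ sqrtWindows}
      ≤ ∑ k ∈ range (Nat.log 4 n + 1), #(Finset.Ioc (4 ^ k) (4 ^ k + 2 ^ k)) :=
        (card_le_card hcover).trans card_biUnion_le
    _ = 2 ^ (Nat.log 4 n + 1) - 1 := by simp [Nat.geomSum_eq le_rfl]
    _ ≤ 2 * 2 ^ Nat.log 4 n := by rw [pow_succ]; lia

lemma two_pow_log_four_le_sqrt {n : ℕ} (hn : n ≠ 0) : (2 : ℝ) ^ Nat.log 4 n ≤ √n := by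
  apply Real.le_sqrt_of_sq_le
  rw [pow_right_comm, show (2 : ℝ) ^ 2 = 4 by norm_num]
  exact_mod_cast Nat.pow_log_le_self 4 hn

lemma sqrt_le_two_mul_two_pow_log_four (n : ℕ) : √n ≤ 2 * 2 ^ Nat.log 4 n := by
  have hn : (n : ℝ) ≤ 4 ^ (Nat.log 4 n + 1) := by
    exact_mod_cast (Nat.lt_pow_succ_log_self (by norm_num) n).le
  refine Real.sqrt_le_iff.2 ⟨by positivity, hn.trans_eq ?_⟩
  rw [← pow_succ', ← pow_mul, mul_comm, pow_mul]
  norm_num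

lemma hasDensity_sqrtWindows : HasDensity sqrtWindows 0 := by
  classical
  have hlim : Tendsto (fun n : ℕ ↦ 2 * (√n)⁻¹) atTop (𝓝 0) := by
    simpa using (tendsto_inv_atTop_zero.comp
      (Real.tendsto_sqrt_atTop.comp tendsto_natCast_atTop_atTop)).const_mul 2
  refine squeeze_zero' (Eventually.of_forall fun n ↦ ?_) ?_ hlim
  · exact smul_nonneg (by positivity) (sum_nonneg fun i _ ↦
      Set.indicator_nonneg (fun _ _ ↦ zero_le_one) i)
  · filter_upwards [eventually_ne_atTop 0] with n hn
    have hcard : (#{i ∈ range n | i ∈ sqrtWindows} : ℝ) ≤ 2 * 2 ^ Nat.log 4 n := by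
      exact_mod_cast card_filter_mem_sqrtWindows_le n
    calc (n : ℝ)⁻¹ • ∑ i ∈ range n, sqrtWindows.indicator (1 : ℕ → ℝ) i
        = (n : ℝ)⁻¹ * #{i ∈ range n | i ∈ sqrtWindows} := by simp [Set.indicator_apply]
      _ ≤ (n : ℝ)⁻¹ * (2 * √n) := by
        gcongr
        linarith [two_pow_log_four_le_sqrt hn]
      _ = 2 * (√n)⁻¹ := by
        rw [← Real.sqrt_div_self]
        ring

lemma le_runL {x : ℕ → Bool} {n i j : ℕ} (hij : i + j ≤ n)
    (hx : ∀ l ∈ Set.Ioc i (i + j), x l = true) : j ≤ runL x n := by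
  classical
  exact Nat.le_findGreatest (by lia) ⟨i, hij, fun k hk hkj ↦ hx _ ⟨by lia, by lia⟩⟩

lemma sqrt_div_four_le_runL {x : ℕ → Bool} (hx : ∀ i ∈ sqrtWindows, x i = true) {n : ℕ}
    (hn : 4 ≤ n) : √n / 4 ≤ runL x n := by
  obtain ⟨k, hk⟩ : ∃ k, Nat.log 4 n = k + 1 :=
    Nat.exists_eq_add_one.2 (Nat.log_pos (by norm_num) hn)
  have hwindow : 4 ^ k + 2 ^ k ≤ n := by
    have hpow : 4 ^ (k + 1) ≤ n := hk ▸ Nat.pow_log_le_self 4 (by lia)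
    have : 2 ^ k ≤ 4 ^ k := Nat.pow_le_pow_left (by norm_num) k
    lia
  have hrun : (2 : ℝ) ^ k ≤ runL x n := by
    exact_mod_cast le_runL hwindow fun l hl ↦ hx l (Set.mem_iUnion.2 ⟨k, hl⟩)
  have hsqrt : √n ≤ 2 * 2 ^ (k + 1) := hk ▸ sqrt_le_two_mul_two_pow_log_four n
  rw [pow_succ] at hsqrt
  linarith

lemma tendsto_rpow_div_logb_atTop {b r : ℝ} (hb : 1 < b) (hr : 0 < r) :
    Tendsto (fun t : ℝ ↦ t ^ r / Real.logb b t) atTop atTop := by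
  have hzero : Tendsto (fun t : ℝ ↦ Real.logb b t / t ^ r) atTop (𝓝 0) := by
    simpa [Real.logb, div_right_comm] using
      (isLittleO_log_rpow_atTop hr).tendsto_div_nhds_zero.div_const (Real.log b)
  have hpos : ∀ᶠ t : ℝ in atTop, 0 < Real.logb b t / t ^ r := by
    filter_upwards [eventually_gt_atTop 1] with t ht
    have := Real.logb_pos hb ht
    positivity
  refine (tendsto_nhdsWithin_iff.2 ⟨hzero, hpos⟩).inv_tendsto_nhdsGT_zero.congr fun t ↦ ?_
  rw [Pi.inv_apply, inv_div]

end Runs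

/-- There is a binary sequence that is normal in base 2 and satisfies
`L_n(x)/log₂ n → ∞`. -/
theorem normal_runratio_tendsto_atTop :
    ∃ x : ℕ → Bool, NormalBaseTwo x ∧
      Tendsto (fun n : ℕ => (runL x n : ℝ) / Real.logb 2 (n : ℝ)) atTop atTop := by
  classical
  obtain ⟨y, hy⟩ := exists_normalBaseTwo
  let x : ℕ → Bool := sqrtWindows.piecewise (fun _ ↦ true) y
  have hxy : Set.EqOn y x sqrtWindowsᶜ := (Set.piecewise_eqOn_compl _ _ _).symm
  have hones : ∀ i ∈ sqrtWindows, x i = true := Set.piecewise_eqOn _ _ _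
  refine ⟨x, hy.congr_of_hasDensity_zero hasDensity_sqrtWindows hxy, ?_⟩
  have hgrowth : Tendsto (fun n : ℕ ↦ √n / 4 / Real.logb 2 n) atTop atTop := by
    simpa [Real.sqrt_eq_rpow, div_right_comm] using
      ((tendsto_rpow_div_logb_atTop one_lt_two one_half_pos).comp
        tendsto_natCast_atTop_atTop).atTop_div_const (four_pos (α := ℝ))
  refine tendsto_atTop_mono' atTop ?_ hgrowth
  filter_upwards [eventually_ge_atTop 4] with n hn
  have hlog : 0 ≤ Real.logb 2 n := Real.logb_nonneg one_lt_two (by norm_cast; lia)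
  exact div_le_div_of_nonneg_right (sqrt_div_four_le_runL hones hn) hlog
end

section
/- There exists a continuous map φ : ℕ^ℕ → {0,1}^ℕ such that for every a ∈ ℕ^ℕ: (i) φ(a) is normal in base 2 if and only if a_{2n} → ∞ as n → ∞, and (ii) φ(a) is typical if and only if a_{2n−1} → ∞ as n → ∞. Consequently, with C = {a ∈ ℕ^ℕ : a_{2n} → ∞} and D = {a ∈ ℕ^ℕ : a_{2n−1} → ∞}, one has φ⁻¹(Normal ∖ TpcN) = C ∖ D and φ⁻¹(TpcN ∖ Normal) = D ∖ C. -/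
open Filter

/-- A binary sequence is typical if `L_n(x)/log₂ n → 1`. -/
def Typical (x : ℕ → Bool) : Prop :=
  Tendsto (fun n : ℕ => (runL x n : ℝ) / Real.logb 2 (n : ℝ)) atTop (nhds 1)

/-!
On `[2 ^ k, 2 ^ (k + 1))` the sequence `φ a` consists of a zero, a run of
`k + k / (a (2 * k - 1) + 1)` ones, about `2 ^ k / (a (2 * k) + 2)` zeros, and then a nearly normal
periodic sequence in which no run of ones is longer than `k + 2`. Partial sums that are `o(2 ^ k)`
on each dyadic interval are `o(n)` overall, and a normal sequence has only runs of zeros of length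
`o(n)`, so `φ a` is normal iff `2 ^ k / (a (2 * k) + 2) = o(2 ^ k)`, that is, iff `a (2 * k) → ∞`.
The inserted runs of ones are too short to influence normality, but their excess over `k` decides
whether `L_n` exceeds `log₂ n` by more than `o(log n)`, so `φ a` is typical iff
`k / (a (2 * k - 1) + 1) = o(k)`, that is, iff `a (2 * k - 1) → ∞`.
-/

open Asymptotics Finset Topology

section Sums

variable {E : Type*}

theorem sum_Ico_one_two_pow_add [AddCommMonoid E] (g : ℕ → E) (k N : ℕ) :
    ∑ i ∈ Ico 1 (2 ^ k + N), g i =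
      ∑ i ∈ Ico 1 (2 ^ k), g i + ∑ p ∈ range N, g (2 ^ k + p) := by
  rw [← sum_Ico_consecutive g Nat.one_le_two_pow (Nat.le_add_right _ N),
    sum_Ico_eq_sum_range g (2 ^ k), Nat.add_sub_cancel_left]

theorem norm_sum_Ico_one_le_of_dyadic [SeminormedAddCommGroup E] {g : ℕ → E} {B : ℕ → ℝ}
    (hB : ∀ k, ∀ N ≤ 2 ^ k, ‖∑ p ∈ range N, g (2 ^ k + p)‖ ≤ B k) (k : ℕ) :
    ∀ N ≤ 2 ^ k, ‖∑ i ∈ Ico 1 (2 ^ k + N), g i‖ ≤ ∑ j ∈ range (k + 1), B j := by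
  induction k with
  | zero => simpa [sum_Ico_eq_sum_range] using hB 0
  | succ k ih =>
    intro N hN
    rw [sum_Ico_one_two_pow_add, sum_range_succ]
    refine (norm_add_le _ _).trans (add_le_add ?_ (hB _ N hN))
    simpa only [pow_succ, mul_two] using ih (2 ^ k) le_rfl

theorem tendsto_natLog_atTop {b : ℕ} (hb : 1 < b) : Tendsto (Nat.log b) atTop atTop :=
  tendsto_atTop_atTop_of_monotone Nat.log_monotone fun k => ⟨b ^ k, (Nat.log_pow hb k).ge⟩

theorem isLittleO_sum_Icc_one_of_dyadic [SeminormedAddCommGroup E] {g : ℕ → E} {B : ℕ → ℝ}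
    (hB : ∀ k, ∀ N ≤ 2 ^ k, ‖∑ p ∈ range N, g (2 ^ k + p)‖ ≤ B k)
    (hB_small : B =o[atTop] fun k => (2 : ℝ) ^ k) :
    (fun n => ∑ i ∈ Icc 1 n, g i) =o[atTop] fun n => (n : ℝ) := by
  have bound : ∀ᶠ n : ℕ in atTop,
      ‖∑ i ∈ Icc 1 n, g i‖ ≤ ‖∑ j ∈ range (Nat.log 2 n + 1), B j‖ := by
    filter_upwards [eventually_ne_atTop 0] with n hn
    have hlow : 2 ^ Nat.log 2 n ≤ n := Nat.pow_log_le_self 2 hn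
    have hupp : n < 2 ^ (Nat.log 2 n + 1) := Nat.lt_pow_succ_log_self one_lt_two n
    have h := norm_sum_Ico_one_le_of_dyadic hB (Nat.log 2 n) (n + 1 - 2 ^ Nat.log 2 n) (by omega)
    rw [show 2 ^ Nat.log 2 n + (n + 1 - 2 ^ Nat.log 2 n) = n + 1 by omega] at h
    exact h.trans (Real.le_norm_self _)
  have partial_sums : (fun m => ∑ j ∈ range m, B j) =o[atTop] fun m => (2 : ℝ) ^ m := by
    have geom (m : ℕ) : ∑ j ∈ range m, (2 : ℝ) ^ j = 2 ^ m - 1 := by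
      rw [geom_sum_eq (by norm_num)]; norm_num
    have := hB_small.sum_range (fun j => by positivity) (by
      simp only [geom]
      exact tendsto_atTop_add_const_right _ _ (tendsto_pow_atTop_atTop_of_one_lt one_lt_two))
    refine this.trans_le fun m => ?_
    rw [geom, Real.norm_of_nonneg (sub_nonneg.2 (one_le_pow₀ one_le_two)),
      Real.norm_of_nonneg (by positivity)]
    linarith
  have dyadic_le : (fun n => (2 : ℝ) ^ (Nat.log 2 n + 1)) =O[atTop] fun n : ℕ => (n : ℝ) := by
    refine IsBigO.of_bound 2 ?_
    filter_upwards [eventually_ne_atTop 0] with n hn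
    have : (2 : ℝ) ^ Nat.log 2 n ≤ n := mod_cast Nat.pow_log_le_self 2 hn
    rw [Real.norm_of_nonneg (by positivity), Real.norm_of_nonneg (by positivity), pow_succ]
    linarith
  exact (IsBigO.of_norm_eventuallyLE bound).trans_isLittleO <|
    (partial_sums.comp_tendsto <|
      (tendsto_add_atTop_nat 1).comp (tendsto_natLog_atTop one_lt_two)).norm_left.trans_isBigO
        dyadic_le

theorem sum_range_mul [AddCommMonoid E] (f : ℕ → E) (Q m : ℕ) :
    ∑ p ∈ range (Q * m), f p = ∑ q ∈ range Q, ∑ r ∈ range m, f (q * m + r) := by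
  induction Q with
  | zero => simp
  | succ Q ih => rw [Nat.succ_mul, sum_range_add, ih, sum_range_succ]

theorem norm_sum_range_le_of_periodic [SeminormedAddCommGroup E] {f : ℕ → E} {L : ℕ}
    (hf : Function.Periodic f L) (hL : 0 < L) (hf_le : ∀ i, ‖f i‖ ≤ 1) (N : ℕ) :
    ‖∑ i ∈ range N, f i‖ ≤ (N / L : ℕ) * ‖∑ i ∈ range L, f i‖ + L := by
  have full (Q : ℕ) : ∑ i ∈ range (Q * L), f i = Q • ∑ i ∈ range L, f i := by
    have shift (q i : ℕ) : f (q * L + i) = f i := by rw [add_comm]; exact hf.nat_mul q i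
    simp only [sum_range_mul, shift, sum_const, card_range]
  rw [← Nat.div_add_mod' N L, sum_range_add, full, Nat.div_add_mod']
  refine (norm_add_le _ _).trans (add_le_add norm_nsmul_le ?_)
  calc ‖∑ i ∈ range (N % L), f (N / L * L + i)‖
      ≤ ∑ _i ∈ range (N % L), (1 : ℝ) := norm_sum_le_of_le _ fun i _ => hf_le _
    _ ≤ L := by simpa using (Nat.mod_lt N hL).le

end Sums

theorem isLittleO_div_natCast {α : Type*} {l : Filter α} (f : α → ℝ) {b : α → ℕ}
    (hb : Tendsto b l atTop) : (fun k => f k / b k) =o[l] f := by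
  have inv_small : (fun k => (b k : ℝ)⁻¹) =o[l] fun _ => (1 : ℝ) :=
    (isLittleO_one_iff ℝ).2 <| tendsto_inv_atTop_zero.comp <| tendsto_natCast_atTop_atTop.comp hb
  simpa only [div_eq_mul_inv, mul_one] using (isBigO_refl f l).mul_isLittleO inv_small

theorem tendsto_atTop_iff_natDiv_isLittleO {α : Type*} {l : Filter α} {N b : α → ℕ} {s : ℕ}
    (hs : s ≠ 0) (hN : Tendsto N l atTop) :
    Tendsto b l atTop ↔
      (fun k => ((N k / (b k + s) : ℕ) : ℝ)) =o[l] fun k => (N k : ℝ) := by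
  constructor
  · intro hb
    have := isLittleO_div_natCast (fun k => (N k : ℝ))
      (tendsto_atTop_mono (fun k => (b k).le_add_right s) hb)
    refine (IsBigO.of_norm_le fun k => ?_).trans_isLittleO this
    rw [Real.norm_of_nonneg (by positivity)]
    exact Nat.cast_div_le
  · refine fun h => tendsto_atTop.2 fun M => ?_
    have hMs : (0 : ℝ) < M + s := by positivity
    filter_upwards [h.bound (c := 1 / (2 * (M + s))) (one_div_pos.2 (mul_pos two_pos hMs)),
      hN.eventually_ge_atTop (2 * (M + s))] with k hk hNk
    by_contra! hbM
    have lower : (N k : ℝ) < (M + s) * ((N k / (b k + s) : ℕ) + 1) := by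
      have : N k < (b k + s) * (N k / (b k + s) + 1) := Nat.lt_mul_div_succ _ (by omega)
      exact mod_cast this.trans_le (Nat.mul_le_mul_right _ (by omega))
    have upper : (M + s) * ((N k / (b k + s) : ℕ) : ℝ) ≤ N k / 2 := by
      rw [Real.norm_of_nonneg (by positivity), Real.norm_of_nonneg (by positivity)] at hk
      calc (M + s) * ((N k / (b k + s) : ℕ) : ℝ) ≤ (M + s) * (1 / (2 * (M + s)) * N k) := by gcongr
        _ = N k / 2 := by field_simp
    have : (2 * (M + s) : ℝ) ≤ N k := mod_cast hNk
    linarith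

theorem isLittleO_const_natCast (C : ℝ) :
    (fun _ : ℕ => C) =o[atTop] fun n : ℕ => (n : ℝ) :=
  (isLittleO_const_id_atTop C).comp_tendsto tendsto_natCast_atTop_atTop

theorem isLittleO_natCast_two_pow : (fun n : ℕ => (n : ℝ)) =o[atTop] fun n : ℕ => (2 : ℝ) ^ n :=
  isLittleO_coe_const_pow_of_one_lt one_lt_two

theorem isLittleO_comp_of_le {α E : Type*} [SeminormedAddCommGroup E] {l : Filter α} {f : ℕ → E}
    {g : ℕ → ℝ} (hfg : f =o[atTop] g) (hg_mono : Monotone g) (hg : Tendsto g atTop atTop)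
    {σ τ : α → ℕ} (hστ : ∀ a, σ a ≤ τ a) (hτ : Tendsto τ l atTop) :
    (fun a => f (σ a)) =o[l] fun a => g (τ a) := by
  refine isLittleO_iff.2 fun ε hε => ?_
  obtain ⟨K, hK⟩ := eventually_atTop.1 ((hfg.bound hε).and (hg.eventually_ge_atTop 0))
  filter_upwards [(hg.comp hτ).eventually_ge_atTop ((∑ i ∈ range K, ‖f i‖) / ε),
    (hg.comp hτ).eventually_ge_atTop 0] with a hlarge hpos
  simp only [Function.comp_apply] at hlarge hpos
  rw [Real.norm_of_nonneg hpos]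
  rcases lt_or_ge (σ a) K with hσ | hσ
  · calc ‖f (σ a)‖ ≤ ∑ i ∈ range K, ‖f i‖ :=
          single_le_sum (f := fun i => ‖f i‖) (fun i _ => norm_nonneg _) (mem_range.2 hσ)
      _ ≤ ε * g (τ a) := (div_le_iff₀' hε).1 hlarge
  · calc ‖f (σ a)‖ ≤ ε * g (σ a) := by simpa [abs_of_nonneg (hK _ hσ).2] using (hK _ hσ).1
      _ ≤ ε * g (τ a) := by gcongr; exact hg_mono (hστ a)

theorem isEquivalent_natLog_logb {b : ℕ} (hb : 1 < b) :
    (fun n : ℕ => (Nat.log b n : ℝ)) ~[atTop] fun n : ℕ => Real.logb b n := by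
  have hlog : Tendsto (fun n : ℕ => Real.logb b n) atTop atTop :=
    (Real.tendsto_logb_atTop (mod_cast hb)).comp tendsto_natCast_atTop_atTop
  refine isEquivalent_of_tendsto_one ((tendsto_nat_floor_div_atTop.comp hlog).congr fun n => ?_)
  simp only [Function.comp_apply, Pi.div_apply, Real.natFloor_logb_natCast]


/-- The deviation from the expected value `2^{-|w|}` of the indicator that the block `w` occurs in
`x` at position `i`; normality says that its partial sums are `o(n)`. -/
noncomputable def blockDev (x : ℕ → Bool) (w : List Bool) (i : ℕ) : ℝ :=
  (if ∀ k ∈ range w.length, x (i + k) = w.getD k false then 1 else 0) - 1 / 2 ^ w.length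

section BlockDev

variable {x y : ℕ → Bool} {w : List Bool}

theorem blockDev_congr {i j : ℕ} (h : ∀ k < w.length, x (i + k) = y (j + k)) :
    blockDev x w i = blockDev y w j := by
  unfold blockDev
  congr 2
  exact propext <| forall₂_congr fun k hk => by rw [h k (mem_range.1 hk)]

theorem blockDev_mem_Icc (x : ℕ → Bool) (w : List Bool) (i : ℕ) :
    blockDev x w i ∈ Set.Icc (-(1 / 2 ^ w.length)) (1 - 1 / 2 ^ w.length : ℝ) := by
  unfold blockDev
  split_ifs <;> constructor <;> norm_num

theorem abs_blockDev_sub_le (x y : ℕ → Bool) (w : List Bool) (i j : ℕ) :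
    |blockDev x w i - blockDev y w j| ≤ 1 :=
  (abs_sub_le_of_le_of_le (blockDev_mem_Icc x w i).1 (blockDev_mem_Icc x w i).2
    (blockDev_mem_Icc y w j).1 (blockDev_mem_Icc y w j).2).trans_eq (by ring)

theorem norm_blockDev_le_one (x : ℕ → Bool) (w : List Bool) (i : ℕ) : ‖blockDev x w i‖ ≤ 1 := by
  have hpos : (0 : ℝ) < 1 / 2 ^ w.length := by positivity
  have hle : (1 : ℝ) / 2 ^ w.length ≤ 1 :=
    div_le_one_of_le₀ (one_le_pow₀ one_le_two) (by positivity)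
  have h := blockDev_mem_Icc x w i
  exact abs_le.2 ⟨by linarith [h.1], by linarith [h.2]⟩

theorem blockDev_nil (x : ℕ → Bool) (i : ℕ) : blockDev x [] i = 0 := by
  simp [blockDev]

theorem blockDev_singleton_true_of_eq_false {i : ℕ} (h : x i = false) :
    blockDev x [true] i = -(1 / 2) := by
  simp [blockDev, h]

theorem normalBaseTwo_iff_isLittleO : NormalBaseTwo x ↔
    ∀ w : List Bool, w ≠ [] →
      (fun n => ∑ i ∈ Icc 1 n, blockDev x w i) =o[atTop] fun n => (n : ℝ) := by
  refine forall₂_congr fun w _ => ?_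
  have sum_eq (n : ℕ) :
      ∑ i ∈ Icc 1 n, blockDev x w i = occCount x w n - n * (1 / 2 ^ w.length) := by
    simp only [blockDev, sum_sub_distrib, sum_boole, sum_const, Nat.card_Icc,
      Nat.add_sub_cancel, nsmul_eq_mul, occCount]
  have hne : ∀ᶠ n : ℕ in atTop, (n : ℝ) ≠ 0 :=
    (eventually_ne_atTop 0).mono fun n hn => Nat.cast_ne_zero.2 hn
  rw [isLittleO_iff_tendsto' (hne.mono fun n hn h => absurd h hn), ← tendsto_sub_nhds_zero_iff]
  refine tendsto_congr' (hne.mono fun n hn => ?_)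
  simp only [sum_eq, sub_div, mul_div_cancel_left₀ _ hn]

theorem abs_sum_blockDev_sub_le {Z M N : ℕ} (hxy : ∀ p, Z < p → p < M → x p = y p) (hN : N ≤ M) :
    |∑ p ∈ range N, blockDev x w p - ∑ p ∈ range N, blockDev y w p| ≤ Z + 1 + w.length := by
  set exceptional := range (Z + 1) ∪ Ico (M - w.length) M
  have termwise (p : ℕ) (hp : p ∈ range N) :
      |blockDev x w p - blockDev y w p| ≤ if p ∈ exceptional then 1 else 0 := by
    split_ifs with h
    · exact abs_blockDev_sub_le x y w p p
    · simp only [exceptional, mem_union, mem_range, mem_Ico] at h hp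
      rw [blockDev_congr fun k hk => hxy (p + k) (by omega) (by omega), sub_self, abs_zero]
  calc |∑ p ∈ range N, blockDev x w p - ∑ p ∈ range N, blockDev y w p|
      ≤ ∑ p ∈ range N, |blockDev x w p - blockDev y w p| := by
        rw [← sum_sub_distrib]; exact abs_sum_le_sum_abs _ _
    _ ≤ ∑ p ∈ range N, if p ∈ exceptional then (1 : ℝ) else 0 := sum_le_sum termwise
    _ ≤ #exceptional := by
        rw [sum_boole]
        exact mod_cast card_le_card fun p hp => (mem_filter.1 hp).2
    _ ≤ Z + 1 + w.length := by
        have : #exceptional ≤ #(range (Z + 1)) + #(Ico (M - w.length) M) := card_union_le _ _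
        rw [card_range, Nat.card_Ico] at this
        exact mod_cast this.trans (by omega)

theorem blockDev_testBit_bit_succ (w : List Bool) (b : Bool) (q r : ℕ) :
    blockDev (Nat.bit b q).testBit w (r + 1) = blockDev q.testBit w r :=
  blockDev_congr fun k _ => by rw [Nat.succ_add, Nat.testBit_bit_succ]

theorem blockDev_testBit_bit_cons_zero (w : List Bool) (b : Bool) (q : ℕ) :
    blockDev (Nat.bit false q).testBit (b :: w) 0 + blockDev (Nat.bit true q).testBit (b :: w) 0 =
      blockDev q.testBit w 0 := by
  have block_iff (c : Bool) :
      (∀ k ∈ range (b :: w).length, (Nat.bit c q).testBit (0 + k) = (b :: w).getD k false) ↔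
        c = b ∧ ∀ k ∈ range w.length, q.testBit (0 + k) = w.getD k false := by
    simp only [List.length_cons, mem_range, zero_add, Nat.forall_lt_succ_left,
      Nat.testBit_bit_zero, Nat.testBit_bit_succ, List.getD_cons_zero, List.getD_cons_succ]
  unfold blockDev
  rw [if_congr (block_iff false) rfl rfl, if_congr (block_iff true) rfl rfl, List.length_cons,
    pow_succ]
  cases b <;> simp only [true_and, false_and, Bool.false_eq_true, Bool.true_eq_false, if_false] <;>
    ring

theorem sum_range_two_pow_succ_bit {E : Type*} [AddCommMonoid E] (f : ℕ → E) (m : ℕ) :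
    ∑ q ∈ range (2 ^ (m + 1)), f q =
      ∑ q ∈ range (2 ^ m), (f (Nat.bit false q) + f (Nat.bit true q)) := by
  rw [pow_succ]
  induction 2 ^ m with
  | zero => simp
  | succ Q ih =>
    rw [Nat.succ_mul, sum_range_succ, sum_range_succ, sum_range_succ, ih, add_assoc,
      Nat.bit_false_apply, Nat.bit_true_apply, mul_comm]

theorem sum_blockDev_testBit_eq_zero {w : List Bool} {m r : ℕ} (h : r + w.length ≤ m) :
    ∑ q ∈ range (2 ^ m), blockDev q.testBit w r = 0 := by
  induction m generalizing w r with
  | zero =>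
    obtain rfl : w = [] := List.length_eq_zero_iff.1 (by omega)
    simp only [blockDev_nil, sum_const_zero]
  | succ m ih =>
    rw [sum_range_two_pow_succ_bit]
    rcases r with _ | r
    · rcases w with _ | ⟨b, w⟩
      · simp only [blockDev_nil, add_zero, sum_const_zero]
      · simp only [blockDev_testBit_bit_cons_zero]
        exact ih (by rw [List.length_cons] at h; omega)
    · simp only [blockDev_testBit_bit_succ, sum_add_distrib]
      rw [ih (by omega), add_zero]

end BlockDev

/-- The concatenation, for `q = 0, 1, 2, …`, of the `m` lowest binary digits of `q`, the lowest
one first. It is periodic, all blocks are nearly equidistributed in a period, and it has no long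
runs of ones. -/
def countingSeq (m p : ℕ) : Bool := (p / m).testBit (p % m)

section CountingSeq

variable {m : ℕ}

theorem countingSeq_mul_add (q : ℕ) {r : ℕ} (hr : r < m) :
    countingSeq m (q * m + r) = q.testBit r := by
  rw [countingSeq, Nat.mul_add_mod_of_lt hr, mul_comm, Nat.mul_add_div (by omega),
    Nat.div_eq_of_lt hr, add_zero]

theorem countingSeq_periodic (hm : 0 < m) :
    Function.Periodic (countingSeq m) (2 ^ m * m) := fun p => by
  rw [countingSeq, Nat.add_mul_div_right _ _ hm, Nat.add_mul_mod_self_right, add_comm,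
    Nat.testBit_two_pow_add_gt (Nat.mod_lt p hm), countingSeq]

theorem blockDev_countingSeq_mul_add {w : List Bool} (q : ℕ) {r : ℕ} (h : r + w.length ≤ m) :
    blockDev (countingSeq m) w (q * m + r) = blockDev q.testBit w r :=
  blockDev_congr fun k hk => by rw [add_assoc, countingSeq_mul_add q (by omega)]

theorem abs_sum_blockDev_countingSeq_period_le (w : List Bool) (m : ℕ) :
    |∑ p ∈ range (2 ^ m * m), blockDev (countingSeq m) w p| ≤ w.length * 2 ^ m := by
  have column (r : ℕ) : |∑ q ∈ range (2 ^ m), blockDev (countingSeq m) w (q * m + r)| ≤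
      if m < r + w.length then 2 ^ m else 0 := by
    split_ifs with h
    · calc _ ≤ ∑ _q ∈ range (2 ^ m), (1 : ℝ) :=
            norm_sum_le_of_le _ fun q _ => norm_blockDev_le_one _ _ _
        _ = 2 ^ m := by simp
    · simp only [blockDev_countingSeq_mul_add _ (not_lt.1 h),
        sum_blockDev_testBit_eq_zero (not_lt.1 h), abs_zero, le_refl]
  have split_columns : ∑ p ∈ range (2 ^ m * m), blockDev (countingSeq m) w p =
      ∑ r ∈ range m, ∑ q ∈ range (2 ^ m), blockDev (countingSeq m) w (q * m + r) := by
    rw [sum_range_mul, sum_comm]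
  calc |∑ p ∈ range (2 ^ m * m), blockDev (countingSeq m) w p|
      ≤ ∑ r ∈ range m, if m < r + w.length then (2 : ℝ) ^ m else 0 := by
        rw [split_columns]
        exact (abs_sum_le_sum_abs _ _).trans (sum_le_sum fun r _ => column r)
    _ = #{r ∈ range m | m < r + w.length} * 2 ^ m := by
        rw [← sum_filter, sum_const, nsmul_eq_mul]
    _ ≤ #(Ico (m - w.length) m) * 2 ^ m := by
        gcongr
        intro r
        simp only [mem_filter, mem_range, mem_Ico]
        omega
    _ ≤ w.length * 2 ^ m := by
        gcongr
        rw [Nat.card_Ico]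
        omega

theorem abs_sum_blockDev_countingSeq_le (hm : 0 < m) (w : List Bool) (N : ℕ) :
    |∑ p ∈ range N, blockDev (countingSeq m) w p| ≤ w.length * (N / m) + m * 2 ^ m := by
  have hperiodic : Function.Periodic (blockDev (countingSeq m) w) (2 ^ m * m) := fun p =>
    blockDev_congr fun k _ => by rw [add_right_comm, countingSeq_periodic hm]
  calc |∑ p ∈ range N, blockDev (countingSeq m) w p|
      ≤ (N / (2 ^ m * m) : ℕ) * |∑ p ∈ range (2 ^ m * m), blockDev (countingSeq m) w p|
          + (2 ^ m * m : ℕ) :=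
        norm_sum_range_le_of_periodic hperiodic (by positivity) (norm_blockDev_le_one _ w) N
    _ ≤ N / (2 ^ m * m : ℕ) * (w.length * 2 ^ m) + (2 ^ m * m : ℕ) := by
        gcongr
        · exact Nat.cast_div_le
        · exact abs_sum_blockDev_countingSeq_period_le w m
    _ = w.length * (N / m) + m * 2 ^ m := by
        push_cast
        field_simp

theorem countingSeq_run_le (hm : 0 < m) {p j : ℕ} (h : ∀ t < j, countingSeq m (p + t) = true) :
    j ≤ 2 * m := by
  -- The window would contain the lowest digits of two consecutive integers.
  by_contra! hj
  obtain ⟨t, ht, q, hq⟩ : ∃ t ≤ m, ∃ q, p + t = q * m := by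
    refine ⟨m - p % m, Nat.sub_le _ _, p / m + 1, ?_⟩
    have := Nat.div_add_mod' p m
    have := Nat.mod_lt p hm
    rw [Nat.succ_mul]
    omega
  have lowest_digit (s : ℕ) : countingSeq m (s * m) = decide (s % 2 = 1) := by
    rw [← add_zero (s * m), countingSeq_mul_add s hm, Nat.testBit_zero]
  have hodd : q % 2 = 1 := by
    simpa only [hq, lowest_digit, decide_eq_true_eq] using h t (by omega)
  have hodd_succ : (q + 1) % 2 = 1 := by
    simpa only [← add_assoc, hq, ← Nat.succ_mul, lowest_digit, decide_eq_true_eq]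
      using h (t + m) (by omega)
  omega

end CountingSeq

section Runs

variable {x : ℕ → Bool} {n : ℕ}

theorem exists_run_runL (x : ℕ → Bool) (n : ℕ) :
    ∃ i, i + runL x n ≤ n ∧ ∀ k, 1 ≤ k → k ≤ runL x n → x (i + k) = true := by
  classical
  exact Nat.findGreatest_spec
    (P := fun j => ∃ i, i + j ≤ n ∧ ∀ k, 1 ≤ k → k ≤ j → x (i + k) = true)
    (Nat.zero_le n) ⟨0, Nat.zero_le n, fun k hk hk' => absurd hk' (by omega)⟩

theorem le_runL_s14 {i j : ℕ} (hn : i + j ≤ n) (h : ∀ k, 1 ≤ k → k ≤ j → x (i + k) = true) :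
    j ≤ runL x n := by
  classical exact Nat.le_findGreatest (by omega) ⟨i, hn, h⟩

theorem typical_iff_isEquivalent :
    Typical x ↔ (fun n => (runL x n : ℝ)) ~[atTop] fun n => (Nat.log 2 n : ℝ) := by
  have hlog : (fun n : ℕ => (Nat.log 2 n : ℝ)) ~[atTop] fun n : ℕ => Real.logb 2 n :=
    mod_cast isEquivalent_natLog_logb one_lt_two
  have logb_ne_zero : ∀ᶠ n : ℕ in atTop, Real.logb 2 n ≠ 0 := by
    filter_upwards [eventually_gt_atTop 1] with n hn
    exact (Real.logb_pos one_lt_two (mod_cast hn)).ne'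
  exact (isEquivalent_iff_tendsto_one logb_ne_zero).symm.trans
    ⟨fun h => h.trans hlog.symm, fun h => h.trans hlog⟩

end Runs

theorem NormalBaseTwo.isLittleO_of_eq_false {x : ℕ → Bool} (hx : NormalBaseTwo x) {α : Type*}
    {l : Filter α} {n z : α → ℕ} (hn : Tendsto n l atTop)
    (hz : (fun a => (z a : ℝ)) =O[l] fun a => (n a : ℝ))
    (hfalse : ∀ᶠ a in l, ∀ i ∈ Ioc (n a) (n a + z a), x i = false) :
    (fun a => (z a : ℝ)) =o[l] fun a => (n a : ℝ) := by
  set D : ℕ → ℝ := fun n => ∑ i ∈ Icc 1 n, blockDev x [true] i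
  have hD : D =o[atTop] fun n => (n : ℝ) :=
    normalBaseTwo_iff_isLittleO.1 hx [true] (List.cons_ne_nil _ _)
  have hend : (fun a => D (n a + z a)) =o[l] fun a => (n a : ℝ) := by
    have hn' := tendsto_atTop_mono (fun a => (n a).le_add_right (z a)) hn
    refine (hD.comp_tendsto hn').trans_isBigO ?_
    simpa only [Function.comp_def, Nat.cast_add] using (isBigO_refl _ l).add hz
  refine ((hend.sub (hD.comp_tendsto hn)).const_mul_left (-2)).congr' ?_ .rfl
  filter_upwards [hfalse] with a ha
  have split : D (n a) + ∑ i ∈ Ioc (n a) (n a + z a), blockDev x [true] i = D (n a + z a) :=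
    sum_Ioc_consecutive _ (Nat.zero_le _) (Nat.le_add_right _ _)
  have drop : ∑ i ∈ Ioc (n a) (n a + z a), blockDev x [true] i = z a * -(1 / 2) := by
    rw [sum_congr rfl fun i hi => blockDev_singleton_true_of_eq_false (ha i hi), sum_const,
      Nat.card_Ioc, Nat.add_sub_cancel_left, nsmul_eq_mul]
  simp only [Function.comp_apply]
  linarith

/-- The digits that `reductionMap` places at the positions `2 ^ k + p`, `p < 2 ^ k`: a zero,
`k + e` ones, zeros up to `p = 2 * k + 1 + g`, and then digits of `countingSeq`. It is meant to be
used with `e ≤ k`. -/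
def dyadicBlock (e g k p : ℕ) : Bool :=
  if p ≤ 2 * k + 1 + g then decide (1 ≤ p ∧ p ≤ k + e) else countingSeq (k / 2 + 1) p

section DyadicBlock

variable {e g k p : ℕ}

theorem dyadicBlock_zero (e g k : ℕ) : dyadicBlock e g k 0 = false := by
  simp [dyadicBlock]

theorem dyadicBlock_eq_true (he : e ≤ k) (h1 : 1 ≤ p) (hp : p ≤ k + e) :
    dyadicBlock e g k p = true := by
  rw [dyadicBlock, if_pos (by omega), decide_eq_true ⟨h1, hp⟩]

theorem dyadicBlock_eq_false (hlow : k + e < p) (hupp : p ≤ 2 * k + 1 + g) :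
    dyadicBlock e g k p = false := by
  rw [dyadicBlock, if_pos hupp, decide_eq_false (by omega)]

theorem dyadicBlock_eq_countingSeq (h : 2 * k + 1 + g < p) :
    dyadicBlock e g k p = countingSeq (k / 2 + 1) p := by
  rw [dyadicBlock, if_neg h.not_ge]

theorem dyadicBlock_run_le (he : e ≤ k) {j : ℕ} (h : ∀ t < j, dyadicBlock e g k (p + t) = true) :
    j ≤ k + e + 2 := by
  rcases lt_or_ge (2 * k + 1 + g) p with hp | hp
  · have := countingSeq_run_le (m := k / 2 + 1) (p := p) (j := j) (Nat.succ_pos _) fun t ht => by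
      rw [← h t ht, dyadicBlock_eq_countingSeq (by omega)]
    omega
  · by_contra! hj
    obtain ⟨t, ht, hlow, hupp⟩ : ∃ t < j, k + e < p + t ∧ p + t ≤ 2 * k + 1 + g :=
      ⟨k + e + 1 - p, by omega, by omega, by omega⟩
    exact Bool.false_ne_true ((dyadicBlock_eq_false hlow hupp).symm.trans (h t ht))

end DyadicBlock

/-- The excess over `k` of the length of the long run of ones in `[2 ^ k, 2 ^ (k + 1))`; it is
`o(k)` exactly if `a (2 * k - 1)` tends to infinity. -/
def runExcess (a : ℕ → ℕ) (k : ℕ) : ℕ := k / (a (2 * k - 1) + 1)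

/-- The length of the stretch of zeros inserted in `[2 ^ k, 2 ^ (k + 1))`; it is `o(2 ^ k)` exactly
if `a (2 * k)` tends to infinity. -/
def zeroGap (a : ℕ → ℕ) (k : ℕ) : ℕ := 2 ^ k / (a (2 * k) + 2)

/-- The reduction of the theorem: its digits at the positions in `[2 ^ k, 2 ^ (k + 1))` are a
`dyadicBlock`. -/
def reductionMap (a : ℕ → ℕ) (i : ℕ) : Bool :=
  dyadicBlock (runExcess a (Nat.log 2 i)) (zeroGap a (Nat.log 2 i)) (Nat.log 2 i)
    (i - 2 ^ Nat.log 2 i)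

theorem continuous_reductionMap : Continuous reductionMap := by
  refine continuous_pi fun i => ?_
  set k := Nat.log 2 i
  have hpair : Continuous fun a : ℕ → ℕ => (a (2 * k - 1), a (2 * k)) := by fun_prop
  exact (continuous_of_discreteTopology (f := fun q : ℕ × ℕ =>
    dyadicBlock (k / (q.1 + 1)) (2 ^ k / (q.2 + 2)) k (i - 2 ^ k))).comp hpair

theorem runExcess_le (a : ℕ → ℕ) (k : ℕ) : runExcess a k ≤ k := Nat.div_le_self _ _

theorem zeroGap_le (a : ℕ → ℕ) (k : ℕ) : zeroGap a k ≤ 2 ^ k / 2 :=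
  Nat.div_le_div_left (by omega) two_pos

theorem isLittleO_countingSeq_discrepancy (C : ℝ) :
    (fun k : ℕ => C * (2 ^ k / (k / 2 + 1 : ℕ)) + (k / 2 + 1 : ℕ) * 2 ^ (k / 2 + 1))
      =o[atTop] fun k => (2 : ℝ) ^ k := by
  have hm : Tendsto (fun k => k / 2 + 1) atTop atTop :=
    (tendsto_add_atTop_nat 1).comp (Nat.tendsto_div_const_atTop two_ne_zero)
  refine ((isLittleO_div_natCast _ hm).const_mul_left C).add <|
    ((isLittleO_natCast_two_pow.comp_tendsto hm).mul_isBigO (isBigO_refl _ _)).trans_isBigO ?_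
  refine IsBigO.of_bound 4 (.of_forall fun k => ?_)
  simp only [Function.comp_apply]
  rw [Real.norm_of_nonneg (by positivity), Real.norm_of_nonneg (by positivity),
    ← pow_add, show (4 : ℝ) = 2 ^ 2 by norm_num, ← pow_add]
  exact pow_le_pow_right₀ one_le_two (by omega)

theorem four_mul_add_two_lt_two_pow {k : ℕ} (hk : 5 ≤ k) : 4 * k + 2 < 2 ^ k := by
  induction k, hk using Nat.le_induction with
  | base => norm_num
  | succ k hk ih => rw [pow_succ]; omega

section ReductionMap

variable (a : ℕ → ℕ)

theorem reductionMap_two_pow_add {k p : ℕ} (hp : p < 2 ^ k) :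
    reductionMap a (2 ^ k + p) = dyadicBlock (runExcess a k) (zeroGap a k) k p := by
  have hlog : Nat.log 2 (2 ^ k + p) = k :=
    Nat.log_eq_of_pow_le_of_lt_pow (Nat.le_add_right _ _) (by rw [pow_succ]; omega)
  rw [reductionMap, hlog, Nat.add_sub_cancel_left]

theorem reductionMap_two_pow (k : ℕ) : reductionMap a (2 ^ k) = false :=
  (reductionMap_two_pow_add a (Nat.two_pow_pos k)).trans (dyadicBlock_zero _ _ _)

theorem abs_sum_blockDev_reductionMap_le (w : List Bool) {k N : ℕ} (hN : N ≤ 2 ^ k) :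
    |∑ p ∈ range N, blockDev (reductionMap a) w (2 ^ k + p)| ≤
      (w.length * (2 ^ k / (k / 2 + 1 : ℕ)) + (k / 2 + 1 : ℕ) * 2 ^ (k / 2 + 1)) +
        ((2 * k + 1 + zeroGap a k : ℕ) + 1 + w.length) := by
  have shift : ∑ p ∈ range N, blockDev (reductionMap a) w (2 ^ k + p) =
      ∑ p ∈ range N, blockDev (fun p => reductionMap a (2 ^ k + p)) w p :=
    sum_congr rfl fun p _ => blockDev_congr fun t _ => by rw [add_assoc]
  have compare := abs_sum_blockDev_sub_le (w := w) (y := countingSeq (k / 2 + 1))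
    (x := fun p => reductionMap a (2 ^ k + p)) (Z := 2 * k + 1 + zeroGap a k)
    (fun p hlow hupp => by
      rw [reductionMap_two_pow_add a hupp, dyadicBlock_eq_countingSeq hlow]) hN
  have counting := abs_sum_blockDev_countingSeq_le (m := k / 2 + 1) (Nat.succ_pos _) w N
  have hN' : (N : ℝ) ≤ 2 ^ k := mod_cast hN
  rw [shift]
  exact (sub_le_iff_le_add'.1 (abs_sub_abs_le_abs_sub _ _)).trans
    (add_le_add (counting.trans (by gcongr)) compare)

theorem isLittleO_zeroGap_of_normalBaseTwo (h : NormalBaseTwo (reductionMap a)) :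
    (fun k => (zeroGap a k : ℝ)) =o[atTop] fun k => ((2 ^ k : ℕ) : ℝ) := by
  have start_le : (fun k : ℕ => ((2 ^ k + 2 * k : ℕ) : ℝ)) =O[atTop]
      fun k => ((2 ^ k : ℕ) : ℝ) := by
    refine IsBigO.of_bound 2 (eventually_atTop.2 ⟨5, fun k hk => ?_⟩)
    have := four_mul_add_two_lt_two_pow hk
    simp only [Real.norm_natCast]
    exact mod_cast (by omega : 2 ^ k + 2 * k ≤ 2 * 2 ^ k)
  have tendsto_start : Tendsto (fun k : ℕ => 2 ^ k + 2 * k) atTop atTop :=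
    tendsto_atTop_mono (fun k => Nat.le_add_right _ _)
      (tendsto_pow_atTop_atTop_of_one_lt one_lt_two)
  refine (h.isLittleO_of_eq_false tendsto_start (z := zeroGap a) ?_ ?_).trans_isBigO start_le
  · refine IsBigO.of_bound' (.of_forall fun k => ?_)
    have := zeroGap_le a k
    simp only [Real.norm_natCast]
    exact mod_cast (by omega : zeroGap a k ≤ 2 ^ k + 2 * k)
  · filter_upwards [eventually_ge_atTop 5] with k hk i hi
    have := four_mul_add_two_lt_two_pow hk
    have := zeroGap_le a k
    have := runExcess_le a k
    rw [mem_Ioc] at hi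
    obtain ⟨p, rfl⟩ : ∃ p, i = 2 ^ k + p := ⟨i - 2 ^ k, by omega⟩
    rw [reductionMap_two_pow_add a (by omega), dyadicBlock_eq_false (by omega) (by omega)]

theorem normalBaseTwo_reductionMap_of_isLittleO
    (h : (fun k => (zeroGap a k : ℝ)) =o[atTop] fun k => ((2 ^ k : ℕ) : ℝ)) :
    NormalBaseTwo (reductionMap a) := by
  refine normalBaseTwo_iff_isLittleO.2 fun w _ => isLittleO_sum_Icc_one_of_dyadic
    (fun k N hN => abs_sum_blockDev_reductionMap_le a w hN)
    ((isLittleO_countingSeq_discrepancy _).add ?_)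
  have const_small (C : ℝ) : (fun _ : ℕ => C) =o[atTop] fun k : ℕ => (2 : ℝ) ^ k :=
    (isLittleO_const_natCast C).trans isLittleO_natCast_two_pow
  push_cast at h ⊢
  exact ((((isLittleO_natCast_two_pow.const_mul_left 2).add (const_small 1)).add h).add
    (const_small 1)).add (const_small _)

theorem normalBaseTwo_reductionMap_iff :
    NormalBaseTwo (reductionMap a) ↔ Tendsto (fun n => a (2 * n)) atTop atTop :=
  (Iff.intro (isLittleO_zeroGap_of_normalBaseTwo a)
    (normalBaseTwo_reductionMap_of_isLittleO a)).trans
    (tendsto_atTop_iff_natDiv_isLittleO two_ne_zero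
      (tendsto_pow_atTop_atTop_of_one_lt one_lt_two)).symm

theorem exists_runL_reductionMap_le (n : ℕ) : ∃ l ≤ Nat.log 2 n,
    runL (reductionMap a) n ≤ l + runExcess a l + 2 := by
  obtain ⟨i, hn, hrun⟩ := exists_run_runL (reductionMap a) n
  rcases Nat.eq_zero_or_pos (runL (reductionMap a) n) with hzero | hpos
  · exact ⟨0, Nat.zero_le _, by omega⟩
  set j := runL (reductionMap a) n
  set l := Nat.log 2 (i + 1)
  have hlow : 2 ^ l ≤ i + 1 := Nat.pow_log_le_self 2 (Nat.succ_ne_zero i)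
  have hupp : i + 1 < 2 ^ (l + 1) := Nat.lt_pow_succ_log_self one_lt_two _
  have run_in_block : i + j < 2 ^ (l + 1) := by
    by_contra! hcross
    have := hrun (2 ^ (l + 1) - i) (by omega) (by omega)
    rw [Nat.add_sub_cancel' (by omega), reductionMap_two_pow] at this
    exact Bool.false_ne_true this
  refine ⟨l, Nat.log_mono_right (by omega),
    dyadicBlock_run_le (runExcess_le a l) (g := zeroGap a l) (p := i + 1 - 2 ^ l) fun t ht => ?_⟩
  rw [pow_succ] at run_in_block
  rw [← reductionMap_two_pow_add a (by omega),
    show 2 ^ l + (i + 1 - 2 ^ l + t) = i + (t + 1) by omega]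
  exact hrun (t + 1) (by omega) (by omega)

theorem le_runL_reductionMap {k n : ℕ} (hk : 5 ≤ k) (hn : 2 ^ (k + 1) ≤ n) :
    k + runExcess a k ≤ runL (reductionMap a) n := by
  have := four_mul_add_two_lt_two_pow hk
  have := runExcess_le a k
  rw [pow_succ] at hn
  refine le_runL_s14 (i := 2 ^ k) (by omega) fun p h1 hp => ?_
  rw [reductionMap_two_pow_add a (by omega), dyadicBlock_eq_true (runExcess_le a k) h1 hp]

theorem isLittleO_runExcess_of_typical (h : Typical (reductionMap a)) :
    (fun k => (runExcess a k : ℝ)) =o[atTop] fun k => (k : ℝ) := by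
  rw [typical_iff_isEquivalent] at h
  have h_pow : (fun k => (runL (reductionMap a) (2 ^ (k + 1)) : ℝ) - (k + 1 : ℕ)) =o[atTop]
      fun k => ((k + 1 : ℕ) : ℝ) := by
    simpa only [Function.comp_def, Pi.sub_apply, Nat.log_pow one_lt_two] using
      h.isLittleO.comp_tendsto <| (tendsto_pow_atTop_atTop_of_one_lt one_lt_two).comp
        (tendsto_add_atTop_nat 1)
  have succ_le : (fun k : ℕ => ((k + 1 : ℕ) : ℝ)) =O[atTop] fun k => (k : ℝ) := by
    simpa only [Nat.cast_succ] using (isBigO_refl _ _).add (isLittleO_const_natCast 1).isBigO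
  refine (IsBigO.of_bound' ?_).trans_isLittleO
    ((h_pow.trans_isBigO succ_le).add (isLittleO_const_natCast 1))
  filter_upwards [eventually_ge_atTop 5] with k hk
  have : (k + runExcess a k : ℝ) ≤ runL (reductionMap a) (2 ^ (k + 1)) :=
    mod_cast le_runL_reductionMap a hk le_rfl
  rw [Real.norm_natCast]
  refine le_trans ?_ (Real.le_norm_self _)
  push_cast
  linarith

theorem typical_reductionMap_of_isLittleO
    (h : (fun k => (runExcess a k : ℝ)) =o[atTop] fun k => (k : ℝ)) :
    Typical (reductionMap a) := by
  have tendsto_log : Tendsto (Nat.log 2) atTop atTop := tendsto_natLog_atTop one_lt_two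
  rw [typical_iff_isEquivalent]
  choose l hl hrun using exists_runL_reductionMap_le a
  have h_excess : (fun n => (runExcess a (l n) : ℝ)) =o[atTop] fun n => (Nat.log 2 n : ℝ) :=
    isLittleO_comp_of_le h Nat.mono_cast tendsto_natCast_atTop_atTop hl tendsto_log
  refine (IsBigO.of_bound' ?_).trans_isLittleO
    (h_excess.add ((isLittleO_const_natCast 2).comp_tendsto tendsto_log))
  filter_upwards [tendsto_log.eventually_ge_atTop 6, eventually_ne_atTop 0] with n hlog hn
  obtain ⟨k, hk⟩ : ∃ k, Nat.log 2 n = k + 1 := ⟨Nat.log 2 n - 1, by omega⟩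
  have lower : k + runExcess a k ≤ runL (reductionMap a) n :=
    le_runL_reductionMap a (by omega) (hk ▸ Nat.pow_log_le_self 2 hn)
  have upper : runL (reductionMap a) n ≤ Nat.log 2 n + runExcess a (l n) + 2 :=
    (hrun n).trans (by grw [hl n])
  have lower' : (Nat.log 2 n : ℝ) ≤ runL (reductionMap a) n + 1 := mod_cast (by omega)
  have upper' : (runL (reductionMap a) n : ℝ) ≤ Nat.log 2 n + runExcess a (l n) + 2 :=
    mod_cast upper
  have : (0 : ℝ) ≤ runExcess a (l n) := Nat.cast_nonneg _
  refine le_trans (abs_le.2 ⟨?_, ?_⟩) (Real.le_norm_self _) <;>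
    simp only [Function.comp_apply, Pi.sub_apply] <;> linarith

theorem typical_reductionMap_iff :
    Typical (reductionMap a) ↔ Tendsto (fun n => a (2 * n - 1)) atTop atTop :=
  (Iff.intro (isLittleO_runExcess_of_typical a)
    (typical_reductionMap_of_isLittleO a)).trans
    (tendsto_atTop_iff_natDiv_isLittleO one_ne_zero tendsto_id).symm

end ReductionMap

/-- There is a continuous map `φ : ℕ^ℕ → {0,1}^ℕ` (product topologies of the
discrete ones) such that `φ a` is normal in base 2 iff the even-indexed
subsequence `a_{2n} → ∞`, and `φ a` is typical iff the odd-indexed subsequence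
`a_{2n−1} → ∞`. Consequently, with `C = {a : a_{2n} → ∞}` and
`D = {a : a_{2n−1} → ∞}`, `φ⁻¹(Normal ∖ TpcN) = C ∖ D` and
`φ⁻¹(TpcN ∖ Normal) = D ∖ C`. -/
theorem difference_reduction :
    ∃ φ : (ℕ → ℕ) → (ℕ → Bool), Continuous φ ∧
      (∀ a : ℕ → ℕ, NormalBaseTwo (φ a) ↔ Tendsto (fun n : ℕ => a (2 * n)) atTop atTop) ∧
      (∀ a : ℕ → ℕ, Typical (φ a) ↔ Tendsto (fun n : ℕ => a (2 * n - 1)) atTop atTop) ∧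
      φ ⁻¹' ({x : ℕ → Bool | NormalBaseTwo x} \ {x : ℕ → Bool | Typical x}) =
        {a : ℕ → ℕ | Tendsto (fun n : ℕ => a (2 * n)) atTop atTop} \
          {a : ℕ → ℕ | Tendsto (fun n : ℕ => a (2 * n - 1)) atTop atTop} ∧
      φ ⁻¹' ({x : ℕ → Bool | Typical x} \ {x : ℕ → Bool | NormalBaseTwo x}) =
        {a : ℕ → ℕ | Tendsto (fun n : ℕ => a (2 * n - 1)) atTop atTop} \
          {a : ℕ → ℕ | Tendsto (fun n : ℕ => a (2 * n)) atTop atTop} :=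
  ⟨reductionMap, continuous_reductionMap, normalBaseTwo_reductionMap_iff, typical_reductionMap_iff,
    Set.ext fun a => and_congr (normalBaseTwo_reductionMap_iff a)
      (not_congr (typical_reductionMap_iff a)),
    Set.ext fun a => and_congr (typical_reductionMap_iff a)
      (not_congr (normalBaseTwo_reductionMap_iff a))⟩
end
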